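/- In a finite MDP, the map π ↦ ρ_π from stationary stochastic policies to occupancy measures is a bijection onto the set of measures satisfying the Bellman flow constraints, with inverse ρ ↦ π(a|s) = ρ(s,a)/Σ_{a'} ρ(s,a') (defined at states with positive marginal). -/

import Mathlib

/-!
A measure of product form `ρ(s,a) = x(s) π(a|s)`, with `π` a policy, satisfies the Bellman flow
constraints iff its state marginal `x` solves `x = (1-γ) p₀ + γ x M`, where `M` is the state
transition matrix of `π`. As `‖γM‖ < 1` in the row-sum norm, the only solution is the Neumann series
`(1-γ) ∑ₜ p₀ (γM)ᵗ`, the state marginal of the occupancy measure of `π`. Marginals of flows are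
positive because `p₀` is, so every flow is such a product, with `π` its conditional distribution.
-/

section NeumannSeries

open Matrix

variable {ι : Type*} [Fintype ι]

open scoped Matrix.Norms.Operator in
theorem linfty_opNorm_le_of_sum_row_le {κ : Type*} [Fintype κ] {N : Matrix ι κ ℝ} {r : ℝ}
    (hr : 0 ≤ r) (hN : ∀ i j, 0 ≤ N i j) (hsum : ∀ i, ∑ j, N i j ≤ r) : ‖N‖ ≤ r := by
  lift r to NNReal using hr
  rw [linfty_opNorm_def, NNReal.coe_le_coe, Finset.sup_le_iff]
  intro i _
  rw [← NNReal.coe_le_coe, NNReal.coe_sum]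
  simpa only [coe_nnnorm, Real.norm_of_nonneg (hN i _)] using hsum i

variable [DecidableEq ι]

open scoped Matrix.Norms.Operator in
theorem summable_pow_of_sum_row_le {N : Matrix ι ι ℝ} {r : ℝ} (hr0 : 0 ≤ r) (hr1 : r < 1)
    (hN : ∀ i j, 0 ≤ N i j) (hsum : ∀ i, ∑ j, N i j ≤ r) : Summable fun t : ℕ => N ^ t :=
  summable_geometric_of_norm_lt_one ((linfty_opNorm_le_of_sum_row_le hr0 hN hsum).trans_lt hr1)

variable {R : Type*} [Ring R] [TopologicalSpace R] [IsTopologicalRing R]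

theorem hasSum_vecMul_pow {N : Matrix ι ι R} (hN : Summable fun t : ℕ => N ^ t) (c : ι → R) :
    HasSum (fun t : ℕ => c ᵥ* N ^ t) (c ᵥ* ∑' t : ℕ, N ^ t) :=
  hN.hasSum.map (vecMulBilin ℕ Rᵐᵒᵖ c) (continuous_const.matrix_vecMul continuous_id)

theorem eq_add_vecMul_iff_eq_tsum [T2Space R] {N : Matrix ι ι R}
    (hN : Summable fun t : ℕ => N ^ t) {c y : ι → R} :
    y = c + y ᵥ* N ↔ y = ∑' t : ℕ, c ᵥ* N ^ t := by
  have hsub : y = c + y ᵥ* N ↔ y ᵥ* (1 - N) = c := by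
    rw [vecMul_sub, vecMul_one, sub_eq_iff_eq_add]
  rw [(hasSum_vecMul_pow hN c).tsum_eq, hsub]
  constructor
  · rintro rfl
    rw [vecMul_vecMul, hN.one_sub_mul_tsum_pow, vecMul_one]
  · rintro rfl
    rw [vecMul_vecMul, hN.tsum_pow_mul_one_sub, vecMul_one]

end NeumannSeries

section MarkovDecisionProcess

open Matrix

variable {S A : Type*} [Fintype A] {γ : ℝ} {p0 : S → ℝ} {P : S → A → S → ℝ} {π ρ : S → A → ℝ}

/-- The stationary stochastic policies, `π s a` being the probability `π(a|s)`. -/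
def stationaryPolicies (S A : Type*) [Fintype A] : Set (S → A → ℝ) :=
  {π | (∀ s a, 0 ≤ π s a) ∧ ∀ s, ∑ a, π s a = 1}

/-- The policy `π(a|s) = ρ(s,a) / ∑ b, ρ(s,b)` obtained by conditioning a state-action measure on
the state. It takes the junk value `0` at states whose marginal vanishes. -/
noncomputable def conditionalPolicy (ρ : S → A → ℝ) (s : S) (a : A) : ℝ :=
  ρ s a / ∑ b, ρ s b

/-- The transition matrix of the Markov chain on states that a policy induces. Rows are indexed by
the current state, so distributions are row vectors and evolve by `ᵥ*`. -/
def transitionMatrix (P : S → A → S → ℝ) (π : S → A → ℝ) : Matrix S S ℝ :=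
  of fun s s' => ∑ a, π s a * P s a s'

theorem transitionMatrix_nonneg (hP : ∀ s a s', 0 ≤ P s a s') (hπ : ∀ s a, 0 ≤ π s a) (s s' : S) :
    0 ≤ transitionMatrix P π s s' :=
  Finset.sum_nonneg fun a _ => mul_nonneg (hπ s a) (hP s a s')

theorem conditionalPolicy_mem_stationaryPolicies (hρ : ∀ s a, 0 ≤ ρ s a)
    (hmarg : ∀ s, 0 < ∑ a, ρ s a) : conditionalPolicy ρ ∈ stationaryPolicies S A :=
  ⟨fun s a => div_nonneg (hρ s a) (hmarg s).le, fun s => by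
    simp only [conditionalPolicy, ← Finset.sum_div, div_self (hmarg s).ne']⟩

theorem sum_mul_conditionalPolicy (hmarg : ∀ s, ∑ a, ρ s a ≠ 0) :
    (fun s a => (∑ a', ρ s a') * conditionalPolicy ρ s a) = ρ := by
  funext s a
  exact mul_div_cancel₀ _ (hmarg s)

variable [Fintype S]

/-- The distribution of the state at time `t` under a policy. -/
def stateDist (p0 : S → ℝ) (P : S → A → S → ℝ) (π : S → A → ℝ) : ℕ → S → ℝ
  | 0 => p0
  | t + 1 => stateDist p0 P π t ᵥ* transitionMatrix P π

/-- The expected discounted number of visits to each state under a policy: the state marginal of the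
occupancy measure before normalization by `1 - γ`. -/
noncomputable def discountedVisits (γ : ℝ) (p0 : S → ℝ) (P : S → A → S → ℝ) (π : S → A → ℝ)
    (s : S) : ℝ :=
  ∑' t : ℕ, γ ^ t * stateDist p0 P π t s

/-- The occupancy measure `ρ_π` of a policy, normalized by `1 - γ`. -/
noncomputable def occupancyMeasure (γ : ℝ) (p0 : S → ℝ) (P : S → A → S → ℝ) (π : S → A → ℝ)
    (s : S) (a : A) : ℝ :=
  (1 - γ) * (π s a * discountedVisits γ p0 P π s)

/-- The nonnegative state-action measures that satisfy the Bellman flow constraints. -/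
def bellmanFlows (γ : ℝ) (p0 : S → ℝ) (P : S → A → S → ℝ) : Set (S → A → ℝ) :=
  {ρ | (∀ s a, 0 ≤ ρ s a) ∧
    ∀ s, ∑ a, ρ s a = (1 - γ) * p0 s + γ * ∑ s', ∑ a', P s' a' s * ρ s' a'}

theorem vecMul_transitionMatrix_apply (x : S → ℝ) (s' : S) :
    (x ᵥ* transitionMatrix P π) s' = ∑ s, ∑ a, x s * π s a * P s a s' := by
  simp only [vecMul, dotProduct, transitionMatrix, of_apply, Finset.mul_sum, mul_assoc]

theorem sum_transitionMatrix_le_one (hPsum : ∀ s a, ∑ s', P s a s' ≤ 1)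
    (hπ : π ∈ stationaryPolicies S A) (s : S) : ∑ s', transitionMatrix P π s s' ≤ 1 :=
  calc
    ∑ s', ∑ a, π s a * P s a s' = ∑ a, π s a * ∑ s', P s a s' := by
      simp only [Finset.mul_sum]
      exact Finset.sum_comm
    _ ≤ ∑ a, π s a := Finset.sum_le_sum fun a _ => mul_le_of_le_one_right (hπ.1 s a) (hPsum s a)
    _ = 1 := hπ.2 s

theorem summable_pow_smul_transitionMatrix [DecidableEq S] (hγ0 : 0 ≤ γ) (hγ1 : γ < 1)
    (hP : ∀ s a s', 0 ≤ P s a s') (hPsum : ∀ s a, ∑ s', P s a s' ≤ 1)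
    (hπ : π ∈ stationaryPolicies S A) :
    Summable fun t : ℕ => (γ • transitionMatrix P π) ^ t := by
  refine summable_pow_of_sum_row_le hγ0 hγ1
    (fun s s' => mul_nonneg hγ0 (transitionMatrix_nonneg hP hπ.1 s s')) fun s => ?_
  simp only [Matrix.smul_apply, smul_eq_mul, ← Finset.mul_sum]
  exact mul_le_of_le_one_right hγ0 (sum_transitionMatrix_le_one hPsum hπ s)

theorem stateDist_nonneg (hp0 : ∀ s, 0 ≤ p0 s) (hP : ∀ s a s', 0 ≤ P s a s')
    (hπ : ∀ s a, 0 ≤ π s a) (t : ℕ) (s : S) : 0 ≤ stateDist p0 P π t s := by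
  induction t generalizing s with
  | zero => exact hp0 s
  | succ t ih => exact dotProduct_nonneg_of_nonneg ih fun s' => transitionMatrix_nonneg hP hπ s' s

theorem stateDist_eq_vecMul_pow [DecidableEq S] (t : ℕ) :
    stateDist p0 P π t = p0 ᵥ* transitionMatrix P π ^ t := by
  induction t with
  | zero => rw [pow_zero, vecMul_one, stateDist]
  | succ t ih => rw [stateDist, ih, vecMul_vecMul, pow_succ]

theorem discountedVisits_nonneg (hγ0 : 0 ≤ γ) (hp0 : ∀ s, 0 ≤ p0 s) (hP : ∀ s a s', 0 ≤ P s a s')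
    (hπ : ∀ s a, 0 ≤ π s a) (s : S) : 0 ≤ discountedVisits γ p0 P π s :=
  tsum_nonneg fun t => mul_nonneg (pow_nonneg hγ0 t) (stateDist_nonneg hp0 hP hπ t s)

theorem discountedVisits_eq_tsum_vecMul_pow [DecidableEq S]
    (hN : Summable fun t : ℕ => (γ • transitionMatrix P π) ^ t) :
    discountedVisits γ p0 P π = ∑' t : ℕ, p0 ᵥ* (γ • transitionMatrix P π) ^ t := by
  funext s
  rw [tsum_apply (hasSum_vecMul_pow hN p0).summable]
  simp only [smul_pow, vecMul_smul, ← stateDist_eq_vecMul_pow, Pi.smul_apply, smul_eq_mul,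
    discountedVisits]

theorem eq_add_smul_vecMul_iff_eq_discountedVisits (hγ0 : 0 ≤ γ) (hγ1 : γ < 1)
    (hP : ∀ s a s', 0 ≤ P s a s') (hPsum : ∀ s a, ∑ s', P s a s' ≤ 1)
    (hπ : π ∈ stationaryPolicies S A) {y : S → ℝ} :
    y = p0 + γ • (y ᵥ* transitionMatrix P π) ↔ y = discountedVisits γ p0 P π := by
  classical
  have hN := summable_pow_smul_transitionMatrix hγ0 hγ1 hP hPsum hπ
  rw [discountedVisits_eq_tsum_vecMul_pow hN, ← eq_add_vecMul_iff_eq_tsum hN, vecMul_smul]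

theorem le_discountedVisits (hγ0 : 0 ≤ γ) (hγ1 : γ < 1) (hp0 : ∀ s, 0 ≤ p0 s)
    (hP : ∀ s a s', 0 ≤ P s a s') (hPsum : ∀ s a, ∑ s', P s a s' ≤ 1)
    (hπ : π ∈ stationaryPolicies S A) (s : S) : p0 s ≤ discountedVisits γ p0 P π s := by
  rw [(eq_add_smul_vecMul_iff_eq_discountedVisits hγ0 hγ1 hP hPsum hπ).2 rfl]
  exact le_add_of_nonneg_right <| mul_nonneg hγ0 <| dotProduct_nonneg_of_nonneg
    (discountedVisits_nonneg hγ0 hp0 hP hπ.1) fun s' => transitionMatrix_nonneg hP hπ.1 s' s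

theorem sum_occupancyMeasure (hπ : ∀ s, ∑ a, π s a = 1) (s : S) :
    ∑ a, occupancyMeasure γ p0 P π s a = (1 - γ) * discountedVisits γ p0 P π s := by
  simp only [occupancyMeasure, ← Finset.mul_sum, ← Finset.sum_mul, hπ, one_mul]

theorem sum_pos_of_mem_bellmanFlows (hγ0 : 0 ≤ γ) (hγ1 : γ < 1) (hp0 : ∀ s, 0 < p0 s)
    (hP : ∀ s a s', 0 ≤ P s a s') (hρ : ρ ∈ bellmanFlows γ p0 P) (s : S) : 0 < ∑ a, ρ s a := by
  rw [hρ.2 s]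
  exact add_pos_of_pos_of_nonneg (mul_pos (sub_pos.2 hγ1) (hp0 s)) <| mul_nonneg hγ0 <|
    Finset.sum_nonneg fun s' _ => Finset.sum_nonneg fun a' _ => mul_nonneg (hP s' a' s) (hρ.1 s' a')

theorem flow_mul_policy_iff (hπ : ∀ s, ∑ a, π s a = 1) {x : S → ℝ} :
    (∀ s, ∑ a, x s * π s a = (1 - γ) * p0 s + γ * ∑ s', ∑ a', P s' a' s * (x s' * π s' a')) ↔
      x = (1 - γ) • p0 + γ • (x ᵥ* transitionMatrix P π) := by
  simp only [← Finset.mul_sum, hπ, mul_one, funext_iff, Pi.add_apply, Pi.smul_apply, smul_eq_mul,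
    vecMul_transitionMatrix_apply, mul_comm (P _ _ _)]

theorem mul_policy_mem_bellmanFlows_iff (hγ0 : 0 ≤ γ) (hγ1 : γ < 1) (hp0 : ∀ s, 0 ≤ p0 s)
    (hP : ∀ s a s', 0 ≤ P s a s') (hPsum : ∀ s a, ∑ s', P s a s' ≤ 1)
    (hπ : π ∈ stationaryPolicies S A) {x : S → ℝ} :
    (fun s a => x s * π s a) ∈ bellmanFlows γ p0 P ↔ x = (1 - γ) • discountedVisits γ p0 P π := by
  have hγ : 0 < 1 - γ := sub_pos.2 hγ1
  have hflow : (∀ s, ∑ a, x s * π s a =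
      (1 - γ) * p0 s + γ * ∑ s', ∑ a', P s' a' s * (x s' * π s' a')) ↔
      x = (1 - γ) • discountedVisits γ p0 P π := by
    rw [flow_mul_policy_iff hπ.2]
    obtain ⟨y, rfl⟩ : ∃ y, x = (1 - γ) • y := ⟨(1 - γ)⁻¹ • x, (smul_inv_smul₀ hγ.ne' x).symm⟩
    rw [smul_vecMul, smul_comm γ, ← smul_add, smul_right_inj hγ.ne', smul_right_inj hγ.ne',
      eq_add_smul_vecMul_iff_eq_discountedVisits hγ0 hγ1 hP hPsum hπ]
  refine ⟨fun h => hflow.1 h.2, fun h => ⟨fun s a => mul_nonneg ?_ (hπ.1 s a), hflow.2 h⟩⟩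
  rw [h]
  exact mul_nonneg hγ.le (discountedVisits_nonneg hγ0 hp0 hP hπ.1 s)

theorem occupancyMeasure_eq_mul_policy : occupancyMeasure γ p0 P π =
    fun s a => ((1 - γ) • discountedVisits γ p0 P π) s * π s a := by
  funext s a
  rw [occupancyMeasure, Pi.smul_apply, smul_eq_mul, mul_assoc, mul_comm (π s a)]

theorem occupancyMeasure_mem_bellmanFlows (hγ0 : 0 ≤ γ) (hγ1 : γ < 1) (hp0 : ∀ s, 0 ≤ p0 s)
    (hP : ∀ s a s', 0 ≤ P s a s') (hPsum : ∀ s a, ∑ s', P s a s' ≤ 1)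
    (hπ : π ∈ stationaryPolicies S A) : occupancyMeasure γ p0 P π ∈ bellmanFlows γ p0 P := by
  rw [occupancyMeasure_eq_mul_policy]
  exact (mul_policy_mem_bellmanFlows_iff hγ0 hγ1 hp0 hP hPsum hπ).2 rfl

theorem conditionalPolicy_occupancyMeasure (hγ0 : 0 ≤ γ) (hγ1 : γ < 1) (hp0 : ∀ s, 0 < p0 s)
    (hP : ∀ s a s', 0 ≤ P s a s') (hPsum : ∀ s a, ∑ s', P s a s' ≤ 1)
    (hπ : π ∈ stationaryPolicies S A) :
    conditionalPolicy (occupancyMeasure γ p0 P π) = π := by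
  funext s a
  have hvisits : 0 < discountedVisits γ p0 P π s :=
    (hp0 s).trans_le (le_discountedVisits hγ0 hγ1 (fun s => (hp0 s).le) hP hPsum hπ s)
  rw [conditionalPolicy, sum_occupancyMeasure hπ.2, occupancyMeasure_eq_mul_policy]
  exact mul_div_cancel_left₀ _ (mul_pos (sub_pos.2 hγ1) hvisits).ne'

theorem occupancyMeasure_conditionalPolicy (hγ0 : 0 ≤ γ) (hγ1 : γ < 1) (hp0 : ∀ s, 0 < p0 s)
    (hP : ∀ s a s', 0 ≤ P s a s') (hPsum : ∀ s a, ∑ s', P s a s' ≤ 1)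
    (hρ : ρ ∈ bellmanFlows γ p0 P) : occupancyMeasure γ p0 P (conditionalPolicy ρ) = ρ := by
  have hmarg := sum_pos_of_mem_bellmanFlows hγ0 hγ1 hp0 hP hρ
  have hprod := sum_mul_conditionalPolicy fun s => (hmarg s).ne'
  have hvisits := (mul_policy_mem_bellmanFlows_iff hγ0 hγ1 (fun s => (hp0 s).le) hP hPsum
    (conditionalPolicy_mem_stationaryPolicies hρ.1 hmarg)).1 (hprod.symm ▸ hρ)
  rw [occupancyMeasure_eq_mul_policy, ← hvisits, hprod]

theorem policy_occupancy_bijection_general (hγ0 : 0 ≤ γ) (hγ1 : γ < 1) (hp0 : ∀ s, 0 < p0 s)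
    (hP : ∀ s a s', 0 ≤ P s a s') (hPsum : ∀ s a, ∑ s', P s a s' ≤ 1) :
    Set.BijOn (occupancyMeasure γ p0 P) (stationaryPolicies S A) (bellmanFlows γ p0 P) ∧
      Set.InvOn conditionalPolicy (occupancyMeasure γ p0 P) (stationaryPolicies S A)
        (bellmanFlows γ p0 P) := by
  have hinv : Set.InvOn conditionalPolicy (occupancyMeasure γ p0 P) (stationaryPolicies S A)
      (bellmanFlows γ p0 P) :=
    ⟨fun _ hπ => conditionalPolicy_occupancyMeasure hγ0 hγ1 hp0 hP hPsum hπ,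
      fun _ hρ => occupancyMeasure_conditionalPolicy hγ0 hγ1 hp0 hP hPsum hρ⟩
  refine ⟨hinv.bijOn (fun π hπ => ?_) fun ρ hρ => ?_, hinv⟩
  · exact occupancyMeasure_mem_bellmanFlows hγ0 hγ1 (fun s => (hp0 s).le) hP hPsum hπ
  · exact conditionalPolicy_mem_stationaryPolicies hρ.1
      (sum_pos_of_mem_bellmanFlows hγ0 hγ1 hp0 hP hρ)

end MarkovDecisionProcess

/-- The map π ↦ ρ_π from stationary stochastic policies to (normalized) occupancy
measures is a bijection onto the set of measures satisfying the Bellman flow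
constraints, with inverse ρ ↦ π(a|s) = ρ(s,a)/Σ_{a'} ρ(s,a'). -/
theorem policy_occupancy_bijection
    {S A : Type*} [Fintype S] [Fintype A] [Nonempty S] [Nonempty A]
    (γ : ℝ) (hγ0 : 0 < γ) (hγ1 : γ < 1)
    (p0 : S → ℝ) (hp0pos : ∀ s, 0 < p0 s) (hp0sum : ∑ s, p0 s = 1)
    (P : S → A → S → ℝ) (hPnn : ∀ s a s', 0 ≤ P s a s')
    (hPsum : ∀ s a, ∑ s', P s a s' = 1)
    -- state distribution at each time step under a policy
    (d : (S → A → ℝ) → ℕ → S → ℝ) (hd0 : ∀ π, d π 0 = p0)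
    (hdsucc : ∀ π t s', d π (t + 1) s' = ∑ s, ∑ a, d π t s * π s a * P s a s')
    -- normalized occupancy measure of a policy
    (occ : (S → A → ℝ) → S → A → ℝ)
    (hocc : ∀ π s a, occ π s a = (1 - γ) * (π s a * ∑' t : ℕ, γ ^ t * d π t s))
    -- the set of stationary stochastic policies
    (Pol : Set (S → A → ℝ))
    (hPol : Pol = {π | (∀ s a, 0 ≤ π s a) ∧ ∀ s, ∑ a, π s a = 1})
    -- the set of occupancy measures satisfying the Bellman flow constraints
    (Flow : Set (S → A → ℝ))
    (hFlow : Flow = {ρ | (∀ s a, 0 ≤ ρ s a) ∧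
      ∀ s, ∑ a, ρ s a = (1 - γ) * p0 s + γ * ∑ s', ∑ a', P s' a' s * ρ s' a'}) :
    Set.BijOn occ Pol Flow ∧
      ∀ π ∈ Pol, ∀ s a, π s a = occ π s a / ∑ a', occ π s a' := by
  subst hPol hFlow
  obtain rfl : d = stateDist p0 P := by
    funext π t
    induction t with
    | zero => exact hd0 π
    | succ t ih =>
      funext s'
      rw [hdsucc, ih, stateDist, vecMul_transitionMatrix_apply]
  obtain rfl : occ = occupancyMeasure γ p0 P := by
    funext π s a
    exact hocc π s a
  obtain ⟨hbij, hinv⟩ :=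
    policy_occupancy_bijection_general hγ0.le hγ1 hp0pos hPnn fun s a => (hPsum s a).le
  exact ⟨hbij, fun π hπ s a => (congrFun₂ (hinv.1 hπ) s a).symm⟩
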